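/- Assume (H1)–(H4). Let y be a solution of (E) belonging to the class S₂ = {y > 0, L₁y < 0, L₂y > 0, L₃y < 0} on [t₁, ∞) for some t₁ ≥ t₀. If ∫_{t₀}^∞ q(s)·π(σ(s))^γ ds = ∞, then there exists t₂ ≥ t₁ such that the function t ↦ y(t)/π(t) is nonincreasing on [t₂, ∞) and tends to 0 as t → ∞. -/

import Mathlib

open Filter MeasureTheory Set

/-- Signed power: for exponents that are quotients of odd positive integers,
`x ^ p` preserves the sign of `x`. -/
noncomputable def opow (x p : ℝ) : ℝ := Real.sign x * |x| ^ p

/-- `L₁y = r₁ · (y')^α`. -/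
noncomputable def L1 (r₁ : ℝ → ℝ) (α : ℝ) (y : ℝ → ℝ) : ℝ → ℝ :=
  fun t => r₁ t * opow (deriv y t) α

/-- `L₂y = r₂ · ((L₁y)')^β`. -/
noncomputable def L2 (r₁ r₂ : ℝ → ℝ) (α β : ℝ) (y : ℝ → ℝ) : ℝ → ℝ :=
  fun t => r₂ t * opow (deriv (L1 r₁ α y) t) β

/-- `L₃y = (L₂y)'`. -/
noncomputable def L3 (r₁ r₂ : ℝ → ℝ) (α β : ℝ) (y : ℝ → ℝ) : ℝ → ℝ :=
  deriv (L2 r₁ r₂ α β y)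

/-- A real number which is a quotient of odd positive integers. -/
def OddQuotient (x : ℝ) : Prop :=
  ∃ m n : ℕ, Odd m ∧ Odd n ∧ 0 < m ∧ 0 < n ∧ x = (m : ℝ) / (n : ℝ)

/-- The standing hypotheses (H1)–(H4). -/
structure Hyp (t₀ α β γ : ℝ) (r₁ r₂ q σ : ℝ → ℝ) : Prop where
  ht₀ : 0 < t₀
  hα : OddQuotient α
  hβ : OddQuotient β
  hγ : OddQuotient γ
  hr₁c : ContinuousOn r₁ (Set.Ici t₀)
  hr₂c : ContinuousOn r₂ (Set.Ici t₀)
  hr₁p : ∀ t, t₀ ≤ t → 0 < r₁ t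
  hr₂p : ∀ t, t₀ ≤ t → 0 < r₂ t
  /-- noncanonical: `π₁(t₀) = ∫_{t₀}^∞ r₁^{-1/α} < ∞` -/
  hπ₁fin : IntegrableOn (fun s => r₁ s ^ (-(1/α))) (Set.Ici t₀)
  /-- noncanonical: `π₂(t₀) = ∫_{t₀}^∞ r₂^{-1/β} < ∞` -/
  hπ₂fin : IntegrableOn (fun s => r₂ s ^ (-(1/β))) (Set.Ici t₀)
  hqc : ContinuousOn q (Set.Ici t₀)
  hq0 : ∀ t, t₀ ≤ t → 0 ≤ q t
  /-- `q` does not vanish eventually -/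
  hqnv : ∀ T, t₀ ≤ T → ∃ t, T ≤ t ∧ q t ≠ 0
  hσd : DifferentiableOn ℝ σ (Set.Ici t₀)
  hσd' : ContinuousOn (deriv σ) (Set.Ici t₀)
  hσpos : ∀ t, t₀ ≤ t → 0 < σ t
  hσadv : ∀ t, t₀ ≤ t → t ≤ σ t
  hσmono : ∀ t, t₀ ≤ t → 0 ≤ deriv σ t

/-- `y` is a (nontrivial) solution of equation (E) on some half-line `[T,∞) ⊆ [t₀,∞)`. -/
def IsSolution (t₀ α β γ : ℝ) (r₁ r₂ q σ y : ℝ → ℝ) : Prop :=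
  ∃ T, t₀ ≤ T ∧
    ContinuousOn y (Set.Ici T) ∧
    DifferentiableOn ℝ y (Set.Ici T) ∧
    ContinuousOn (L1 r₁ α y) (Set.Ici T) ∧
    DifferentiableOn ℝ (L1 r₁ α y) (Set.Ici T) ∧
    ContinuousOn (L2 r₁ r₂ α β y) (Set.Ici T) ∧
    DifferentiableOn ℝ (L2 r₁ r₂ α β y) (Set.Ici T) ∧
    (∀ t, T ≤ t → L3 r₁ r₂ α β y t + q t * opow (y (σ t)) γ = 0) ∧
    (∀ T', T ≤ T' → ∃ t, T' ≤ t ∧ y t ≠ 0)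

/-- A function is oscillatory if it has arbitrarily large zeros. -/
def Oscillatory (y : ℝ → ℝ) : Prop := ∀ T : ℝ, ∃ t, T ≤ t ∧ y t = 0

/-- Equation (E) has property A: every solution is oscillatory or tends to `0`. -/
def PropertyA (t₀ α β γ : ℝ) (r₁ r₂ q σ : ℝ → ℝ) : Prop :=
  ∀ y : ℝ → ℝ, IsSolution t₀ α β γ r₁ r₂ q σ y →
    Oscillatory y ∨ Filter.Tendsto y Filter.atTop (nhds 0)

/-- Equation (E) is oscillatory: every solution is oscillatory. -/
def OscillatoryEq (t₀ α β γ : ℝ) (r₁ r₂ q σ : ℝ → ℝ) : Prop :=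
  ∀ y : ℝ → ℝ, IsSolution t₀ α β γ r₁ r₂ q σ y → Oscillatory y

/-- `π₁(t) = ∫_t^∞ r₁(s)^{-1/α} ds`. -/
noncomputable def pi1 (r₁ : ℝ → ℝ) (α : ℝ) (t : ℝ) : ℝ :=
  ∫ s in Set.Ioi t, r₁ s ^ (-(1/α))

/-- `π₂(t) = ∫_t^∞ r₂(s)^{-1/β} ds`. -/
noncomputable def pi2 (r₂ : ℝ → ℝ) (β : ℝ) (t : ℝ) : ℝ :=
  ∫ s in Set.Ioi t, r₂ s ^ (-(1/β))

/-- `π(t) = ∫_t^∞ r₁(s)^{-1/α} · π₂(s)^{1/α} ds`. -/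
noncomputable def piInf (r₁ r₂ : ℝ → ℝ) (α β : ℝ) (t : ℝ) : ℝ :=
  ∫ s in Set.Ioi t, r₁ s ^ (-(1/α)) * (pi2 r₂ β s) ^ (1/α)

/-- The class `S₁`: `y > 0, L₁y < 0, L₂y < 0, L₃y < 0` on `[t₁,∞)`. -/
def InS1 (r₁ r₂ : ℝ → ℝ) (α β : ℝ) (y : ℝ → ℝ) (t₁ : ℝ) : Prop :=
  ∀ t, t₁ ≤ t → 0 < y t ∧ L1 r₁ α y t < 0 ∧ L2 r₁ r₂ α β y t < 0 ∧ L3 r₁ r₂ α β y t < 0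

/-- The class `S₂`: `y > 0, L₁y < 0, L₂y > 0, L₃y < 0` on `[t₁,∞)`. -/
def InS2 (r₁ r₂ : ℝ → ℝ) (α β : ℝ) (y : ℝ → ℝ) (t₁ : ℝ) : Prop :=
  ∀ t, t₁ ≤ t → 0 < y t ∧ L1 r₁ α y t < 0 ∧ 0 < L2 r₁ r₂ α β y t ∧ L3 r₁ r₂ α β y t < 0

/-- The class `S₃`: `y > 0, L₁y > 0, L₂y > 0, L₃y < 0` on `[t₁,∞)`. -/
def InS3 (r₁ r₂ : ℝ → ℝ) (α β : ℝ) (y : ℝ → ℝ) (t₁ : ℝ) : Prop :=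
  ∀ t, t₁ ≤ t → 0 < y t ∧ 0 < L1 r₁ α y t ∧ 0 < L2 r₁ r₂ α β y t ∧ L3 r₁ r₂ α β y t < 0

/-- The class `S₄`: `y > 0, L₁y > 0, L₂y < 0, L₃y < 0` on `[t₁,∞)`. -/
def InS4 (r₁ r₂ : ℝ → ℝ) (α β : ℝ) (y : ℝ → ℝ) (t₁ : ℝ) : Prop :=
  ∀ t, t₁ ≤ t → 0 < y t ∧ 0 < L1 r₁ α y t ∧ L2 r₁ r₂ α β y t < 0 ∧ L3 r₁ r₂ α β y t < 0


/-- Tail integrals are differentiable. -/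
lemma tail_hasDerivAt {f : ℝ → ℝ} {a t : ℝ} (hc : ContinuousOn f (Ioi a))
    (hi : IntegrableOn f (Ioi a)) (ht : a < t) :
    HasDerivAt (fun t => ∫ s in Ioi t, f s) (-f t) t := by
  have hct : ContinuousAt f t := hc.continuousAt (Ioi_mem_nhds ht)
  have hii : ∀ s, a < s → IntervalIntegrable f volume a s := fun s hs =>
    (intervalIntegrable_iff_integrableOn_Ioc_of_le hs.le).2 (hi.mono_set Ioc_subset_Ioi_self)
  have h1 : HasDerivAt (fun u => ∫ s in a..u, f s) (f t) t :=
    intervalIntegral.integral_hasDerivAt_right (hii t ht)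
      (hc.stronglyMeasurableAtFilter isOpen_Ioi t ht) hct
  have h2 : HasDerivAt (fun u => (∫ s in Ioi a, f s) - ∫ s in a..u, f s) (-f t) t := by
    simpa using h1.const_sub (∫ s in Ioi a, f s)
  refine h2.congr_of_eventuallyEq ?_
  filter_upwards [Ioi_mem_nhds ht] with u hu
  have hu' : a < u := hu
  have := intervalIntegral.integral_interval_add_Ioi (μ := volume) hi
    (hi.mono_set (Ioi_subset_Ioi hu'.le))
  linarith

lemma tail_tendsto {f : ℝ → ℝ} {a : ℝ} (hi : IntegrableOn f (Ioi a)) :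
    Tendsto (fun t => ∫ s in Ioi t, f s) atTop (nhds 0) := by
  have h := intervalIntegral_tendsto_integral_Ioi a hi tendsto_id
  have h2 : Tendsto (fun u => (∫ s in Ioi a, f s) - ∫ s in a..u, f s) atTop (nhds 0) := by
    simpa using h.const_sub (∫ s in Ioi a, f s)
  refine h2.congr' ?_
  filter_upwards [eventually_gt_atTop a] with u hu
  have := intervalIntegral.integral_interval_add_Ioi (μ := volume) hi
    (hi.mono_set (Ioi_subset_Ioi hu.le))
  linarith

lemma antitone_of_hasDerivAt {f f' : ℝ → ℝ} {a : ℝ} (hf : ∀ t, a ≤ t → HasDerivAt f (f' t) t)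
    (h : ∀ t, a ≤ t → f' t ≤ 0) : AntitoneOn f (Ici a) := by
  apply antitoneOn_of_deriv_nonpos (convex_Ici a)
  · exact fun t ht => (hf t ht).continuousAt.continuousWithinAt
  · exact fun t ht => (hf t (interior_subset ht)).differentiableAt.differentiableWithinAt
  · intro t ht
    rw [(hf t (interior_subset ht)).deriv]
    exact h t (interior_subset ht)

lemma strictAnti_of_hasDerivAt {f f' : ℝ → ℝ} {a : ℝ} (hf : ∀ t, a ≤ t → HasDerivAt f (f' t) t)
    (h : ∀ t, a ≤ t → f' t < 0) : StrictAntiOn f (Ici a) := by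
  apply strictAntiOn_of_deriv_neg (convex_Ici a)
  · exact fun t ht => (hf t ht).continuousAt.continuousWithinAt
  · intro t ht
    rw [(hf t (interior_subset ht)).deriv]
    exact h t (interior_subset ht)

lemma pos_of_tail {g g' : ℝ → ℝ} {a : ℝ} (hg : ∀ t, a ≤ t → HasDerivAt g (g' t) t)
    (h : ∀ t, a ≤ t → g' t < 0) (hlim : Tendsto g atTop (nhds 0)) (t : ℝ) (ht : a ≤ t) :
    0 < g t := by
  have hs := strictAnti_of_hasDerivAt hg h
  have h1 : g (t + 1) < g t := hs ht (by simp only [mem_Ici]; linarith) (by linarith)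
  have h2 : 0 ≤ g (t + 1) := by
    refine le_of_tendsto hlim ?_
    filter_upwards [eventually_ge_atTop (t + 1)] with s hs'
    exact hs.antitoneOn (by simp only [mem_Ici]; linarith) (by simp only [mem_Ici]; linarith) hs'
  linarith

/-- Lower comparison. -/
lemma lower_cmp {f f' g g' : ℝ → ℝ} {a k : ℝ} (hf : ∀ t, a ≤ t → HasDerivAt f (f' t) t)
    (hg : ∀ t, a ≤ t → HasDerivAt g (g' t) t) (hlim : Tendsto g atTop (nhds 0))
    (hpos : ∀ t, a ≤ t → 0 ≤ f t) (h : ∀ t, a ≤ t → f' t ≤ k * g' t) (t : ℝ) (ht : a ≤ t) :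
    k * g t ≤ f t := by
  have hanti : AntitoneOn (fun t => f t - k * g t) (Ici a) :=
    antitone_of_hasDerivAt (fun t ht => (hf t ht).sub ((hg t ht).const_mul k))
      (fun t ht => by have := h t ht; linarith)
  have h2 : Tendsto (fun s => -(k * g s)) atTop (nhds 0) := by
    simpa using (hlim.const_mul k).neg
  have h3 : 0 ≤ f t - k * g t := by
    refine le_of_tendsto h2 ?_
    filter_upwards [eventually_ge_atTop t] with s hs
    have h4 : f s - k * g s ≤ f t - k * g t := hanti ht (le_trans ht hs) hs
    have := hpos s (ht.trans hs)
    linarith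
  linarith

/-- Monotone ratio rule. -/
lemma ratio_lemma {f g g' φ : ℝ → ℝ} {a : ℝ}
    (hf : ∀ t, a ≤ t → HasDerivAt f (φ t * g' t) t)
    (hg : ∀ t, a ≤ t → HasDerivAt g (g' t) t)
    (hg' : ∀ t, a ≤ t → g' t < 0) (hflim : Tendsto f atTop (nhds 0))
    (hglim : Tendsto g atTop (nhds 0)) (hφ : AntitoneOn φ (Ici a))
    (hφlim : Tendsto φ atTop (nhds 0)) (hpos : ∀ t, a ≤ t → 0 ≤ f t) :
    AntitoneOn (fun t => f t / g t) (Ici a) ∧ Tendsto (fun t => f t / g t) atTop (nhds 0) := by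
  have gpos := pos_of_tail hg hg' hglim
  have key : ∀ t, a ≤ t → f t ≤ φ t * g t := by
    intro t ht
    have hanti : AntitoneOn (fun s => φ t * g s - f s) (Ici t) :=
      antitone_of_hasDerivAt
        (fun s hs => ((hg s (ht.trans hs)).const_mul (φ t)).sub (hf s (ht.trans hs)))
        (fun s hs => by
          have h1 : φ s ≤ φ t := hφ ht (ht.trans hs) hs
          have h2 := hg' s (ht.trans hs)
          nlinarith)
    have h2 : Tendsto (fun s => φ t * g s - f s) atTop (nhds 0) := by
      simpa using (hglim.const_mul (φ t)).sub hflim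
    have h3 : 0 ≤ φ t * g t - f t := by
      refine le_of_tendsto h2 ?_
      filter_upwards [eventually_ge_atTop t] with s hs
      exact hanti self_mem_Ici hs hs
    linarith
  constructor
  · refine antitone_of_hasDerivAt (fun t ht => (hf t ht).div (hg t ht) (gpos t ht).ne') ?_
    intro t ht
    apply div_nonpos_of_nonpos_of_nonneg _ (sq_nonneg _)
    have := key t ht
    have := hg' t ht
    nlinarith
  · refine tendsto_of_tendsto_of_tendsto_of_le_of_le' tendsto_const_nhds hφlim ?_ ?_
    · filter_upwards [eventually_ge_atTop a] with t ht
      exact div_nonneg (hpos t ht) (gpos t ht).le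
    · filter_upwards [eventually_ge_atTop a] with t ht
      rw [div_le_iff₀ (gpos t ht)]
      exact key t ht

lemma tendsto_zero_of_antitone {f : ℝ → ℝ} {a : ℝ} (h : AntitoneOn f (Ici a))
    (hpos : ∀ t, a ≤ t → 0 ≤ f t) (hno : ∀ c, 0 < c → ¬ ∀ t, a ≤ t → c ≤ f t) :
    Tendsto f atTop (nhds 0) := by
  rw [Metric.tendsto_atTop]
  intro ε hε
  have := hno ε hε
  push Not at this
  obtain ⟨t, ht, hlt⟩ := this
  refine ⟨t, fun s hs => ?_⟩
  have h1 : f s ≤ f t := h ht (le_trans ht hs) hs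
  have h2 := hpos s (ht.trans hs)
  rw [Real.dist_eq, sub_zero, abs_of_nonneg h2]
  linarith

lemma opow_of_pos {x : ℝ} (hx : 0 < x) (p : ℝ) : opow x p = x ^ p := by
  simp [opow, Real.sign_of_pos hx, abs_of_pos hx]

lemma opow_of_neg {x : ℝ} (hx : x < 0) (p : ℝ) : opow x p = -(-x) ^ p := by
  simp [opow, Real.sign_of_neg hx, abs_of_neg hx]

/-- Inverting `r * x ^ p` for positive values. -/
lemma invert_pos {r x p : ℝ} (hr : 0 < r) (hp : 0 < p) (h : 0 < r * opow x p) :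
    x = (r * opow x p) ^ (1 / p) * r ^ (-(1 / p)) := by
  have h1 : 0 < opow x p := pos_of_mul_pos_right h hr.le
  have hx : 0 < x := by
    rcases lt_trichotomy x 0 with hx | hx | hx
    · rw [opow_of_neg hx] at h1
      have := Real.rpow_nonneg (by linarith : 0 ≤ -x) p
      linarith
    · simp [opow, hx] at h1
    · exact hx
  rw [opow_of_pos hx, Real.mul_rpow hr.le (Real.rpow_nonneg hx.le p), ← Real.rpow_mul hx.le,
    mul_one_div_cancel hp.ne', Real.rpow_one, Real.rpow_neg hr.le]
  have := (Real.rpow_pos_of_pos hr (1 / p)).ne'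
  field_simp

lemma opow_neg' (x p : ℝ) : opow (-x) p = -opow x p := by
  rcases lt_trichotomy x 0 with hx | hx | hx
  · rw [opow_of_neg hx, opow_of_pos (by linarith)]; ring
  · simp [opow, hx]
  · rw [opow_of_pos hx, opow_of_neg (by linarith)]; simp

lemma oddQuotient_pos {x : ℝ} (h : OddQuotient x) : 0 < x := by
  obtain ⟨m, n, -, -, hm, hn, rfl⟩ := h
  positivity

theorem S2_ratio_decreasing (t₀ α β γ t₁ : ℝ) (r₁ r₂ q σ y : ℝ → ℝ)
    (H : Hyp t₀ α β γ r₁ r₂ q σ)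
    (hy : IsSolution t₀ α β γ r₁ r₂ q σ y)
    (ht₁ : t₀ ≤ t₁)
    (hS2 : InS2 r₁ r₂ α β y t₁)
    (hdiv : Filter.Tendsto (fun t => ∫ s in t₀..t, q s * (piInf r₁ r₂ α β (σ s)) ^ γ)
      Filter.atTop Filter.atTop) :
    ∃ t₂, t₁ ≤ t₂ ∧ AntitoneOn (fun t => y t / piInf r₁ r₂ α β t) (Set.Ici t₂) ∧
      Filter.Tendsto (fun t => y t / piInf r₁ r₂ α β t) Filter.atTop (nhds 0) := by
  obtain ⟨T, hT0, -, hyd, -, hL1d, -, hL2d, heq, -⟩ := hy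
  have hα := oddQuotient_pos H.hα
  have hβ := oddQuotient_pos H.hβ
  have hγ := oddQuotient_pos H.hγ
  -- derivatives of the weights
  have hc2 : ContinuousOn (fun s => r₂ s ^ (-(1/β))) (Ioi t₀) :=
    (H.hr₂c.mono Ioi_subset_Ici_self).rpow_const fun t ht => Or.inl (H.hr₂p t (le_of_lt ht)).ne'
  have hc1 : ContinuousOn (fun s => r₁ s ^ (-(1/α))) (Ioi t₀) :=
    (H.hr₁c.mono Ioi_subset_Ici_self).rpow_const fun t ht => Or.inl (H.hr₁p t (le_of_lt ht)).ne'
  have hi2 := H.hπ₂fin.mono_set (Ioi_subset_Ici_self (a := t₀))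
  have hi1 := H.hπ₁fin.mono_set (Ioi_subset_Ici_self (a := t₀))
  have hd2 : ∀ t, t₀ < t → HasDerivAt (pi2 r₂ β) (-(r₂ t ^ (-(1/β)))) t :=
    fun t ht => tail_hasDerivAt hc2 hi2 ht
  have hl2 : Tendsto (pi2 r₂ β) atTop (nhds 0) := tail_tendsto hi2
  have hneg2 : ∀ t, t₀ < t → -(r₂ t ^ (-(1/β))) < 0 := fun t ht =>
    neg_neg_of_pos (Real.rpow_pos_of_pos (H.hr₂p t ht.le) _)
  have hp2 : ∀ t, t₀ < t → 0 < pi2 r₂ β t := fun t ht =>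
    pos_of_tail (fun s hs => hd2 s (ht.trans_le hs)) (fun s hs => hneg2 s (ht.trans_le hs))
      hl2 t le_rfl
  have hb2 : ∀ t, t₀ < t → pi2 r₂ β t ≤ pi2 r₂ β t₀ := by
    intro t ht
    refine setIntegral_mono_set hi2 ?_ (Ioi_subset_Ioi ht.le).eventuallyLE
    filter_upwards [ae_restrict_mem measurableSet_Ioi] with s hs
    exact Real.rpow_nonneg (H.hr₂p s (le_of_lt hs)).le _
  have hcp : ContinuousOn (fun s => (pi2 r₂ β s) ^ (1/α)) (Ioi t₀) := by
    refine ContinuousOn.rpow_const (fun t ht => (hd2 t ht).continuousAt.continuousWithinAt) ?_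
    exact fun t ht => Or.inl (hp2 t ht).ne'
  have hc : ContinuousOn (fun s => r₁ s ^ (-(1/α)) * (pi2 r₂ β s) ^ (1/α)) (Ioi t₀) := hc1.mul hcp
  have hi : IntegrableOn (fun s => r₁ s ^ (-(1/α)) * (pi2 r₂ β s) ^ (1/α)) (Ioi t₀) := by
    refine Integrable.mono' (hi1.mul_const ((pi2 r₂ β t₀) ^ (1/α)))
      (hc.aestronglyMeasurable measurableSet_Ioi) ?_
    filter_upwards [ae_restrict_mem measurableSet_Ioi] with s hs
    have h1 := Real.rpow_nonneg (H.hr₁p s (le_of_lt hs)).le (-(1/α))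
    have h2 := Real.rpow_nonneg (hp2 s hs).le (1/α)
    rw [Real.norm_of_nonneg (mul_nonneg h1 h2)]
    exact mul_le_mul_of_nonneg_left
      (Real.rpow_le_rpow (hp2 s hs).le (hb2 s hs) (by positivity)) h1
  have hd : ∀ t, t₀ < t →
      HasDerivAt (piInf r₁ r₂ α β) (-(r₁ t ^ (-(1/α)) * (pi2 r₂ β t) ^ (1/α))) t :=
    fun t ht => tail_hasDerivAt hc hi ht
  have hl : Tendsto (piInf r₁ r₂ α β) atTop (nhds 0) := tail_tendsto hi
  have hneg : ∀ t, t₀ < t → -(r₁ t ^ (-(1/α)) * (pi2 r₂ β t) ^ (1/α)) < 0 := fun t ht =>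
    neg_neg_of_pos (mul_pos (Real.rpow_pos_of_pos (H.hr₁p t ht.le) _)
      (Real.rpow_pos_of_pos (hp2 t ht) _))
  have hp : ∀ t, t₀ < t → 0 < piInf r₁ r₂ α β t := fun t ht =>
    pos_of_tail (fun s hs => hd s (ht.trans_le hs)) (fun s hs => hneg s (ht.trans_le hs))
      hl t le_rfl
  -- the working half-line
  obtain ⟨a, ha⟩ : ∃ a, a = max T t₁ + 1 := ⟨_, rfl⟩
  have haT : T < a := by have := le_max_left T t₁; linarith
  have ha1 : t₁ < a := by have := le_max_right T t₁; linarith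
  have ha0 : t₀ < a := by linarith
  have hpi2anti : AntitoneOn (pi2 r₂ β) (Ici a) :=
    antitone_of_hasDerivAt (fun t ht => hd2 t (ha0.trans_le ht))
      (fun t ht => (hneg2 t (ha0.trans_le ht)).le)
  have hpianti : AntitoneOn (piInf r₁ r₂ α β) (Ici a) :=
    antitone_of_hasDerivAt (fun t ht => hd t (ha0.trans_le ht))
      (fun t ht => (hneg t (ha0.trans_le ht)).le)
  have ypos : ∀ t, a ≤ t → 0 < y t := fun t ht => (hS2 t (ha1.le.trans ht)).1
  have L1neg : ∀ t, a ≤ t → L1 r₁ α y t < 0 := fun t ht => (hS2 t (ha1.le.trans ht)).2.1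
  have L2pos : ∀ t, a ≤ t → 0 < L2 r₁ r₂ α β y t := fun t ht => (hS2 t (ha1.le.trans ht)).2.2.1
  have L3neg : ∀ t, a ≤ t → L3 r₁ r₂ α β y t < 0 := fun t ht => (hS2 t (ha1.le.trans ht)).2.2.2
  have hyD : ∀ t, a ≤ t → HasDerivAt y
      ((-L1 r₁ α y t) ^ (1/α) * -(r₁ t ^ (-(1/α)))) t := by
    intro t ht
    have h1 := (hyd.differentiableAt (Ici_mem_nhds (haT.trans_le ht))).hasDerivAt
    have h2 := L1neg t ht
    have h3 : -L1 r₁ α y t = r₁ t * opow (-deriv y t) α := by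
      rw [opow_neg']; simp [L1]
    have h4 := invert_pos (H.hr₁p t (ha0.le.trans ht)) hα (by rw [← h3]; linarith)
    rw [← h3] at h4
    refine h1.congr_deriv ?_
    linarith
  have hL1D : ∀ t, a ≤ t → HasDerivAt (fun t => -L1 r₁ α y t)
      ((L2 r₁ r₂ α β y t) ^ (1/β) * -(r₂ t ^ (-(1/β)))) t := by
    intro t ht
    have h1 := (hL1d.differentiableAt (Ici_mem_nhds (haT.trans_le ht))).hasDerivAt.neg
    have h4 := invert_pos (H.hr₂p t (ha0.le.trans ht)) hβ (L2pos t ht)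
    refine h1.congr_deriv ?_
    change _ = (r₂ t * opow (deriv (L1 r₁ α y) t) β) ^ (1/β) * -(r₂ t ^ (-(1/β)))
    linarith
  have hL2D : ∀ t, a ≤ t → HasDerivAt (L2 r₁ r₂ α β y) (L3 r₁ r₂ α β y t) t := fun t ht =>
    (hL2d.differentiableAt (Ici_mem_nhds (haT.trans_le ht))).hasDerivAt
  have yanti : AntitoneOn y (Ici a) := antitone_of_hasDerivAt hyD fun t ht => by
    have h1 := Real.rpow_nonneg (neg_pos.2 (L1neg t ht)).le (1/α)
    have h2 := Real.rpow_nonneg (H.hr₁p t (ha0.le.trans ht)).le (-(1/α))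
    nlinarith
  have L1anti : AntitoneOn (fun t => -L1 r₁ α y t) (Ici a) :=
    antitone_of_hasDerivAt hL1D fun t ht => by
      have h1 := Real.rpow_nonneg (L2pos t ht).le (1/β)
      have h2 := hneg2 t (ha0.trans_le ht)
      nlinarith
  have L2anti : AntitoneOn (L2 r₁ r₂ α β y) (Ici a) :=
    antitone_of_hasDerivAt hL2D fun t ht => (L3neg t ht).le
  -- Claim A
  have claimA : ∀ c, 0 < c → ¬ ∀ t, a ≤ t → c * piInf r₁ r₂ α β t ≤ y t := by
    intro c hc0 hle
    obtain ⟨b, hb⟩ := (hdiv.eventually_gt_atTop 0).exists_forall_of_atTop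
    obtain ⟨m, hm⟩ : ∃ m, m = max a b := ⟨_, rfl⟩
    have ham : a ≤ m := hm ▸ le_max_left _ _
    have hbm : b ≤ m := hm ▸ le_max_right _ _
    have hcont : ContinuousOn (fun s => q s * (piInf r₁ r₂ α β (σ s)) ^ γ) (Ioi t₀) := by
      refine (H.hqc.mono Ioi_subset_Ici_self).mul (ContinuousOn.rpow_const ?_ ?_)
      · intro t ht
        have h1 : ContinuousAt (piInf r₁ r₂ α β) (σ t) :=
          (hd (σ t) (lt_of_lt_of_le ht (H.hσadv t (le_of_lt ht)))).continuousAt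
        have h2 : ContinuousAt σ t := (H.hσd.differentiableAt (Ici_mem_nhds ht)).continuousAt
        exact (ContinuousAt.comp (f := σ) h1 h2).continuousWithinAt
      · exact fun t ht => Or.inr hγ.le
    have hG : ∀ t, m ≤ t → HasDerivAt (fun t => ∫ s in t₀..t, q s * (piInf r₁ r₂ α β (σ s)) ^ γ)
        (q t * (piInf r₁ r₂ α β (σ t)) ^ γ) t := by
      intro t ht
      have htt : t₀ < t := by linarith
      refine intervalIntegral.integral_hasDerivAt_right ?_
        (hcont.stronglyMeasurableAtFilter isOpen_Ioi t htt) (hcont.continuousAt (Ioi_mem_nhds htt))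
      by_contra hni
      have := hb t (hbm.trans ht)
      rw [intervalIntegral.integral_undef hni] at this
      exact lt_irrefl _ this
    have hanti := antitone_of_hasDerivAt (a := m)
      (fun t ht => (hL2D t (ham.trans ht)).add ((hG t ht).const_mul (c ^ γ))) (fun t ht => by
        have h0 : t₀ ≤ t := by linarith
        have hs : a ≤ σ t := (ham.trans ht).trans (H.hσadv t h0)
        have h1 := heq t (by linarith)
        rw [opow_of_pos (ypos _ hs)] at h1
        have hpp := hp (σ t) (ha0.trans_le hs)
        have h2 : (c * piInf r₁ r₂ α β (σ t)) ^ γ ≤ (y (σ t)) ^ γ :=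
          Real.rpow_le_rpow (mul_pos hc0 hpp).le (hle _ hs) hγ.le
        rw [Real.mul_rpow hc0.le hpp.le] at h2
        have h3 := mul_le_mul_of_nonneg_left h2 (H.hq0 t h0)
        nlinarith)
    have hcγ : 0 < c ^ γ := Real.rpow_pos_of_pos hc0 _
    have hbig := (hdiv.const_mul_atTop hcγ).eventually_gt_atTop
      (L2 r₁ r₂ α β y m + c ^ γ * ∫ s in t₀..m, q s * (piInf r₁ r₂ α β (σ s)) ^ γ)
    obtain ⟨t, ht1, ht2⟩ := (hbig.and (eventually_ge_atTop m)).exists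
    have h1 := hanti (self_mem_Ici : m ∈ Ici m) ht2 ht2
    have h2 := L2pos t (ham.trans ht2)
    simp only [Pi.add_apply] at h1
    linarith
  -- Claim B
  have claimB : ∀ c, 0 < c → ¬ ∀ t, a ≤ t → c * pi2 r₂ β t ≤ -L1 r₁ α y t := by
    intro c hc0 hle
    refine claimA (c ^ (1/α)) (Real.rpow_pos_of_pos hc0 _) ?_
    refine lower_cmp hyD (fun t ht => hd t (ha0.trans_le ht)) hl (fun t ht => (ypos t ht).le) ?_
    intro t ht
    have hpp := hp2 t (ha0.trans_le ht)
    have h1 : (c * pi2 r₂ β t) ^ (1/α) ≤ (-L1 r₁ α y t) ^ (1/α) :=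
      Real.rpow_le_rpow (mul_pos hc0 hpp).le (hle t ht) (by positivity)
    rw [Real.mul_rpow hc0.le hpp.le] at h1
    have h2 := Real.rpow_nonneg (H.hr₁p t (ha0.le.trans ht)).le (-(1/α))
    nlinarith [mul_le_mul_of_nonneg_right h1 h2]
  have ylim : Tendsto y atTop (nhds 0) := by
    refine tendsto_zero_of_antitone yanti (fun t ht => (ypos t ht).le) fun c hc0 hle => ?_
    have hpa := hp a ha0
    refine claimA (c / piInf r₁ r₂ α β a) (div_pos hc0 hpa) fun t ht => le_trans ?_ (hle t ht)
    rw [div_mul_eq_mul_div, div_le_iff₀ hpa]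
    exact mul_le_mul_of_nonneg_left (hpianti self_mem_Ici ht ht) hc0.le
  have L1lim : Tendsto (fun t => -L1 r₁ α y t) atTop (nhds 0) := by
    refine tendsto_zero_of_antitone L1anti (fun t ht => (neg_pos.2 (L1neg t ht)).le)
      fun c hc0 hle => ?_
    have hpa := hp2 a ha0
    refine claimB (c / pi2 r₂ β a) (div_pos hc0 hpa) fun t ht => le_trans ?_ (hle t ht)
    rw [div_mul_eq_mul_div, div_le_iff₀ hpa]
    exact mul_le_mul_of_nonneg_left (hpi2anti self_mem_Ici ht ht) hc0.le
  have L2lim : Tendsto (L2 r₁ r₂ α β y) atTop (nhds 0) := by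
    refine tendsto_zero_of_antitone L2anti (fun t ht => (L2pos t ht).le) fun c hc0 hle => ?_
    refine claimB (c ^ (1/β)) (Real.rpow_pos_of_pos hc0 _) ?_
    refine lower_cmp hL1D (fun t ht => hd2 t (ha0.trans_le ht)) hl2
      (fun t ht => (neg_pos.2 (L1neg t ht)).le) ?_
    intro t ht
    have h1 : c ^ (1/β) ≤ (L2 r₁ r₂ α β y t) ^ (1/β) :=
      Real.rpow_le_rpow hc0.le (hle t ht) (by positivity)
    have h2 := hneg2 t (ha0.trans_le ht)
    nlinarith
  have rpow_lim : ∀ (f : ℝ → ℝ) (p : ℝ), 0 < p → Tendsto f atTop (nhds 0) →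
      Tendsto (fun t => f t ^ p) atTop (nhds 0) := by
    intro f p hp0 hf
    have := hf.rpow_const (p := p) (Or.inr hp0.le)
    rwa [Real.zero_rpow hp0.ne'] at this
  obtain ⟨R1, R2⟩ := ratio_lemma hL1D (fun t ht => hd2 t (ha0.trans_le ht))
    (fun t ht => hneg2 t (ha0.trans_le ht)) L1lim hl2
    (fun s hs t ht hst => Real.rpow_le_rpow (L2pos t ht).le (L2anti hs ht hst) (by positivity))
    (rpow_lim _ (1/β) (by positivity) L2lim) (fun t ht => (neg_pos.2 (L1neg t ht)).le)
  have Rpos : ∀ t, a ≤ t → 0 ≤ -L1 r₁ α y t / pi2 r₂ β t := fun t ht =>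
    div_nonneg (neg_pos.2 (L1neg t ht)).le (hp2 t (ha0.trans_le ht)).le
  refine ⟨a, ha1.le, ?_⟩
  refine ratio_lemma (φ := fun t => (-L1 r₁ α y t / pi2 r₂ β t) ^ (1/α)) ?_
    (fun t ht => hd t (ha0.trans_le ht))
    (fun t ht => hneg t (ha0.trans_le ht)) ylim hl
    (fun s hs t ht hst => Real.rpow_le_rpow (Rpos t ht) (R1 hs ht hst) (by positivity))
    (rpow_lim _ (1/α) (by positivity) R2) (fun t ht => (ypos t ht).le)
  intro t ht
  convert hyD t ht using 1
  have hpp := hp2 t (ha0.trans_le ht)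
  rw [Real.div_rpow (neg_pos.2 (L1neg t ht)).le hpp.le]
  have := (Real.rpow_pos_of_pos hpp (1/α)).ne'
  field_simp
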